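/- arXiv:1310.4618 — 2 statements merged into one kernel-verified Lean document; each statement's English description precedes it below -/
import Mathlib

section
/- Let n, k ≥ 1 and let R̂ ∈ S²_B(⋀²ℝⁿ) be an Einstein algebraic curvature operator with s(R̂) > 0 which is not a scalar multiple of id ∧ id, satisfying Q(R̂) = λR̂ for some λ > 0. Let E : S²_B(⋀²ℝⁿ) → S²_B(⋀²ℝ^{n+k}) denote extension by zero as a product curvature operator (E(S) agrees with S on ⋀²ℝⁿ and vanishes on e_i ∧ e_j whenever i or j exceeds n). Then for every α₀ ∈ (0,1) the curve R(t) = (α₀/(1 − λα₀t)) E(R̂_I) + (1/(1 − λt)) E(R̂_W), t ∈ [0, 1/λ), solves dR/dt = Q(R(t)) in S²_B(⋀²ℝ^{n+k}) with R(0) = E(α₀R̂_I + R̂_W), and R(t)/‖R(t)‖ converges to E(R̂_W)/‖R̂_W‖ as t → 1/λ. In particular the ODE dR/dt = Q(R) behaves unstably near the product curvature operator E(R̂). -/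
open scoped BigOperators
open Matrix Filter

noncomputable section

/-- `so n`: the Lie algebra of real skew-symmetric `n × n` matrices, as a submodule of
matrices.  It is the model for `⋀²ℝⁿ` under the identification `x ∧ y ↦ x yᵀ - y xᵀ`,
i.e. `(x ∧ y)(z) = ⟨y,z⟩x - ⟨x,z⟩y`. -/
def so (n : ℕ) : Submodule ℝ (Matrix (Fin n) (Fin n) ℝ) where
  carrier := {A | Aᵀ = -A}
  add_mem' := fun {a b} ha hb => by
    simp only [Set.mem_setOf_eq] at *
    rw [Matrix.transpose_add, ha, hb, neg_add]
  zero_mem' := by simp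
  smul_mem' := fun c {a} ha => by
    simp only [Set.mem_setOf_eq] at *
    rw [Matrix.transpose_smul, ha, smul_neg]

lemma mem_so {n : ℕ} {A : Matrix (Fin n) (Fin n) ℝ} : A ∈ so n ↔ Aᵀ = -A := Iff.rfl

lemma so_skew {n : ℕ} (X : so n) : (X.1)ᵀ = -X.1 := mem_so.mp X.2

lemma so_skew' {n : ℕ} (X : so n) (i j : Fin n) : X.1 j i = -X.1 i j := by
  have h := congrFun (congrFun (so_skew X) i) j
  simpa [Matrix.transpose_apply] using h

/-- The Lie bracket (matrix commutator) on `so n`. -/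
def brkt {n : ℕ} (X Y : so n) : so n :=
  ⟨X.1 * Y.1 - Y.1 * X.1, by
    rw [mem_so, Matrix.transpose_sub, Matrix.transpose_mul, Matrix.transpose_mul,
      so_skew X, so_skew Y]
    simp [neg_sub]⟩

/-- The inner product `⟨A, B⟩ = -(1/2) tr (A B)` on `so n ≅ ⋀²ℝⁿ`, for which
`{e_i ∧ e_j : i < j}` is orthonormal. -/
def ip {n : ℕ} (X Y : so n) : ℝ := -(1 / 2) * (X.1 * Y.1).trace

/-- `ip X` as a linear functional. -/
def ipL {n : ℕ} (X : so n) : so n →ₗ[ℝ] ℝ where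
  toFun Y := ip X Y
  map_add' Y Z := by
    simp [ip, Matrix.mul_add, Matrix.trace_add]
    ring
  map_smul' c Y := by
    simp [ip, Matrix.mul_smul, Matrix.trace_smul]
    ring

/-- The wedge `x ∧ y` of two vectors, as an element of `so n`. -/
def wedgeVec {n : ℕ} (x y : Fin n → ℝ) : so n :=
  ⟨Matrix.of fun i j => x i * y j - y i * x j, by
    rw [mem_so]
    ext i j
    simp [Matrix.transpose_apply]
    ring⟩

/-- Index set for the standard orthonormal basis `{e_i ∧ e_j : i < j}` of `so n`. -/
def pairs (n : ℕ) : Finset (Fin n × Fin n) := Finset.univ.filter (fun p => p.1 < p.2)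

/-- Standard basis vector of `ℝⁿ`. -/
def stdVec {n : ℕ} (i : Fin n) : Fin n → ℝ := Pi.single i 1

/-- The standard orthonormal basis element `e_i ∧ e_j` of `so n`. -/
def omegaB {n : ℕ} (p : Fin n × Fin n) : so n := wedgeVec (stdVec p.1) (stdVec p.2)

/-- Hamilton's sharp product `A # B` of self-adjoint endomorphisms of `⋀²ℝⁿ ≅ so n`:
`⟨(A # B)(φ), ψ⟩ = (1/2) Σ_{α,β} ⟨[A ω_α, B ω_β], φ⟩ ⟨[ω_α, ω_β], ψ⟩`
over the orthonormal basis `{ω_α} = {e_i ∧ e_j : i < j}`. -/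
def sharp {n : ℕ} (A B : Module.End ℝ (so n)) : Module.End ℝ (so n) :=
  (1 / 2 : ℝ) • ∑ p ∈ pairs n, ∑ q ∈ pairs n,
    (ipL (brkt (A (omegaB p)) (B (omegaB q)))).smulRight (brkt (omegaB p) (omegaB q))

/-- The bilinear map `Q(A,B) = (1/2)(AB + BA) + A # B`. -/
def Qbil {n : ℕ} (A B : Module.End ℝ (so n)) : Module.End ℝ (so n) :=
  (1 / 2 : ℝ) • (A * B + B * A) + sharp A B

/-- `Q(R) = R² + R # R`. -/
def Qop {n : ℕ} (R : Module.End ℝ (so n)) : Module.End ℝ (so n) := R * R + sharp R R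

/-- Self-adjointness of an endomorphism of `so n ≅ ⋀²ℝⁿ`. -/
def IsSelfAdjointCO {n : ℕ} (R : Module.End ℝ (so n)) : Prop :=
  ∀ X Y : so n, ip (R X) Y = ip X (R Y)

/-- The first Bianchi identity. -/
def SatBianchi {n : ℕ} (R : Module.End ℝ (so n)) : Prop :=
  ∀ x y z w : Fin n → ℝ,
    ip (R (wedgeVec x y)) (wedgeVec z w) + ip (R (wedgeVec y z)) (wedgeVec x w)
      + ip (R (wedgeVec z x)) (wedgeVec y w) = 0

/-- Algebraic curvature operators: self-adjoint endomorphisms of `⋀²ℝⁿ` satisfying the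
first Bianchi identity.  `IsACO R` says `R ∈ S²_B(⋀²ℝⁿ)`. -/
def IsACO {n : ℕ} (R : Module.End ℝ (so n)) : Prop := IsSelfAdjointCO R ∧ SatBianchi R

/-- The Ricci tensor of `R`, `Ric(R)_{ij} = Σ_k ⟨R(e_i ∧ e_k), e_j ∧ e_k⟩`. -/
def RicM {n : ℕ} (R : Module.End ℝ (so n)) : Matrix (Fin n) (Fin n) ℝ :=
  Matrix.of fun i j => ∑ k, ip (R (wedgeVec (stdVec i) (stdVec k))) (wedgeVec (stdVec j) (stdVec k))

/-- The scalar curvature `s(R) = tr Ric(R)`. -/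
def scal {n : ℕ} (R : Module.End ℝ (so n)) : ℝ := (RicM R).trace

/-- `‖Ric(R)‖² = tr (Ric(R)²)`. -/
def ricNormSq {n : ℕ} (R : Module.End ℝ (so n)) : ℝ := (RicM R * RicM R).trace

/-- The traceless Ricci tensor `Ric₀(R)`. -/
def Ric0M {n : ℕ} (R : Module.End ℝ (so n)) : Matrix (Fin n) (Fin n) ℝ :=
  RicM R - (scal R / n) • (1 : Matrix (Fin n) (Fin n) ℝ)

/-- `R` is Einstein if `Ric(R)` is a scalar multiple of the identity of `ℝⁿ`. -/
def IsEinstein {n : ℕ} (R : Module.End ℝ (so n)) : Prop :=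
  ∃ c : ℝ, RicM R = c • (1 : Matrix (Fin n) (Fin n) ℝ)

lemma wedgeEnd_key {n : ℕ} (A B : Matrix (Fin n) (Fin n) ℝ) (M : so n) :
    (A * M.1 * Bᵀ + B * M.1 * Aᵀ)ᵀ = -(A * M.1 * Bᵀ + B * M.1 * Aᵀ) := by
  have hM := so_skew M
  rw [Matrix.transpose_add, Matrix.transpose_mul, Matrix.transpose_mul,
    Matrix.transpose_mul, Matrix.transpose_mul, Matrix.transpose_transpose,
    Matrix.transpose_transpose, hM]
  simp only [Matrix.mul_neg, Matrix.neg_mul, Matrix.mul_assoc, neg_add]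
  abel

/-- The wedge `A ∧ B` of two endomorphisms of `ℝⁿ`, as an endomorphism of `⋀²ℝⁿ ≅ so n`:
`(A ∧ B)(v ∧ w) = (1/2)(Av ∧ Bw + Bv ∧ Aw)`, i.e. `M ↦ (1/2)(A M Bᵀ + B M Aᵀ)`. -/
def wedgeEnd {n : ℕ} (A B : Matrix (Fin n) (Fin n) ℝ) : Module.End ℝ (so n) where
  toFun M := ⟨(1 / 2 : ℝ) • (A * M.1 * Bᵀ + B * M.1 * Aᵀ), by
    rw [mem_so, Matrix.transpose_smul, wedgeEnd_key, smul_neg]⟩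
  map_add' M N := by
    apply Subtype.ext
    simp [Matrix.mul_add, Matrix.add_mul, smul_add]
    abel
  map_smul' c M := by
    apply Subtype.ext
    simp [Matrix.mul_smul, Matrix.smul_mul, smul_smul, mul_comm]

/-- Inner product `⟨A, B⟩ = tr(A ∘ B)` on endomorphisms of `⋀²ℝⁿ` (the Frobenius inner
product for self-adjoint operators). -/
def endIP {n : ℕ} (A B : Module.End ℝ (so n)) : ℝ := LinearMap.trace ℝ ↥(so n) (A * B)

/-- Norm of an endomorphism of `⋀²ℝⁿ` induced by `endIP`. -/
def endNorm {n : ℕ} (A : Module.End ℝ (so n)) : ℝ := Real.sqrt (endIP A A)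

/-- Huisken's trilinear form `tri(A,B,C) = tr((AB + BA + 2 A#B) ∘ C) = 2⟨Q(A,B), C⟩`. -/
def tri {n : ℕ} (A B C : Module.End ℝ (so n)) : ℝ :=
  LinearMap.trace ℝ ↥(so n) ((A * B + B * A + (2 : ℝ) • sharp A B) * C)

/-- The identity component `R_I = (s(R)/(n(n-1))) id ∧ id` of a curvature operator. -/
def compI {n : ℕ} (R : Module.End ℝ (so n)) : Module.End ℝ (so n) :=
  (scal R / ((n : ℝ) * ((n : ℝ) - 1))) • 1

/-- The traceless-Ricci component `R_{Ric₀} = (2/(n-2)) Ric₀(R) ∧ id`. -/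
def compRic0 {n : ℕ} (R : Module.End ℝ (so n)) : Module.End ℝ (so n) :=
  (2 / ((n : ℝ) - 2)) • wedgeEnd (Ric0M R) 1

/-- The Weyl component `R_W = R - R_I - R_{Ric₀}`. -/
def compW {n : ℕ} (R : Module.End ℝ (so n)) : Module.End ℝ (so n) := R - compI R - compRic0 R

/-- The derivative `DQ̃(R)` of the normalized vector field
`Q̃(R) = Q(R) - ‖Ric R‖² R` at `R`, applied to `A`:
`DQ̃(R)(A) = 2Q(R,A) - ‖Ric R‖² A - 2 tr(Ric R · Ric A) R`. -/
def DQt {n : ℕ} (R A : Module.End ℝ (so n)) : Module.End ℝ (so n) :=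
  (2 : ℝ) • Qbil R A - ricNormSq R • A - (2 * (RicM R * RicM A).trace) • R


/-- Extension of a vector of `ℝ^{n₁}` by zero to `ℝ^{n₁+n₂}`. -/
def inlV {n₁ n₂ : ℕ} (v : Fin n₁ → ℝ) : Fin (n₁ + n₂) → ℝ :=
  fun i => if h : (i : ℕ) < n₁ then v ⟨i, h⟩ else 0

/-- Extension of a vector of `ℝ^{n₂}` by zero to `ℝ^{n₁+n₂}` (into the second factor). -/
def inrV {n₁ n₂ : ℕ} (w : Fin n₂ → ℝ) : Fin (n₁ + n₂) → ℝ :=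
  fun i => if h : (i : ℕ) < n₁ then 0 else w ⟨(i : ℕ) - n₁, by omega⟩

lemma inrV_aux {n₁ n₂ : ℕ} (i : Fin (n₁ + n₂)) (h : ¬ (i : ℕ) < n₁) :
    (i : ℕ) - n₁ < n₂ := by omega

/-- Embedding `so n₁ → so (n₁ + n₂)` as the upper-left block. -/
def embSoL {n₁ n₂ : ℕ} (M : so n₁) : so (n₁ + n₂) :=
  ⟨Matrix.of fun i j =>
      if hi : (i : ℕ) < n₁ then
        (if hj : (j : ℕ) < n₁ then M.1 ⟨i, hi⟩ ⟨j, hj⟩ else 0)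
      else 0, by
    rw [mem_so]
    ext i j
    simp only [Matrix.transpose_apply, Matrix.of_apply, Matrix.neg_apply]
    by_cases hi : (i : ℕ) < n₁ <;> by_cases hj : (j : ℕ) < n₁ <;>
      simp [hi, hj]
    exact so_skew' M _ _⟩

/-- Embedding `so n₂ → so (n₁ + n₂)` as the lower-right block. -/
def embSoR {n₁ n₂ : ℕ} (M : so n₂) : so (n₁ + n₂) :=
  ⟨Matrix.of fun i j =>
      if hi : (i : ℕ) < n₁ then 0
      else if hj : (j : ℕ) < n₁ then 0
      else M.1 ⟨(i : ℕ) - n₁, inrV_aux i hi⟩ ⟨(j : ℕ) - n₁, inrV_aux j hj⟩, by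
    rw [mem_so]
    ext i j
    simp only [Matrix.transpose_apply, Matrix.of_apply, Matrix.neg_apply]
    by_cases hi : (i : ℕ) < n₁ <;> by_cases hj : (j : ℕ) < n₁ <;>
      simp [hi, hj]
    exact so_skew' M _ _⟩

/-- `R ∈ S²_B(⋀²ℝ^{n₁+n₂})` is the product curvature operator of `R₁` and `R₂`:
`R(v ∧ w) = R_i(v ∧ w)` for `v, w` in the `i`-th factor, and `R(v ∧ w) = 0` for
`v ∈ ℝ^{n₁}`, `w ∈ ℝ^{n₂}`. -/
def IsProductOf {n₁ n₂ : ℕ} (R : Module.End ℝ (so (n₁ + n₂)))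
    (R₁ : Module.End ℝ (so n₁)) (R₂ : Module.End ℝ (so n₂)) : Prop :=
  (∀ v w : Fin n₁ → ℝ,
     R (wedgeVec (inlV v) (inlV w)) = embSoL (R₁ (wedgeVec v w))) ∧
  (∀ v w : Fin n₂ → ℝ,
     R (wedgeVec (inrV v) (inrV w)) = embSoR (R₂ (wedgeVec v w))) ∧
  (∀ (v : Fin n₁ → ℝ) (w : Fin n₂ → ℝ),
     R (wedgeVec (inlV v) (inrV w)) = 0)

/-- Restriction of a skew matrix on `ℝ^{n+k}` to its upper-left `n × n` block. -/
def resSo {n k : ℕ} (M : so (n + k)) : so n :=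
  ⟨Matrix.of fun i j =>
      M.1 (Fin.castLE (Nat.le_add_right n k) i) (Fin.castLE (Nat.le_add_right n k) j), by
    rw [mem_so]
    ext i j
    simp only [Matrix.transpose_apply, Matrix.of_apply, Matrix.neg_apply]
    exact so_skew' M _ _⟩

lemma resSo_add {n k : ℕ} (M N : so (n + k)) : resSo (M + N) = resSo M + resSo N := by
  apply Subtype.ext
  ext i j
  simp [resSo]

lemma resSo_smul {n k : ℕ} (c : ℝ) (M : so (n + k)) : resSo (c • M) = c • resSo M := by
  apply Subtype.ext
  ext i j
  simp [resSo]

lemma embSoL_add {n₁ n₂ : ℕ} (M N : so n₁) :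
    (embSoL (M + N) : so (n₁ + n₂)) = embSoL M + embSoL N := by
  apply Subtype.ext
  ext i j
  simp only [embSoL, Matrix.of_apply, Submodule.coe_add, Matrix.add_apply]
  split_ifs <;> simp

lemma embSoL_smul {n₁ n₂ : ℕ} (c : ℝ) (M : so n₁) :
    (embSoL (c • M) : so (n₁ + n₂)) = c • embSoL M := by
  apply Subtype.ext
  ext i j
  simp only [embSoL, Matrix.of_apply, SetLike.val_smul, Matrix.smul_apply, smul_eq_mul]
  split_ifs <;> simp

/-- Extension by zero of a curvature operator on `⋀²ℝⁿ` to one on `⋀²ℝ^{n+k}`,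
making it the product curvature operator of `S` with the zero operator on `ℝᵏ`:
`E(S)` agrees with `S` on `⋀²ℝⁿ` and vanishes on `e_i ∧ e_j` whenever `i` or `j`
exceeds `n`. -/
def extEnd {n k : ℕ} (S : Module.End ℝ (so n)) : Module.End ℝ (so (n + k)) where
  toFun M := embSoL (S (resSo M))
  map_add' M N := by
    show embSoL (S (resSo (M + N))) = embSoL (S (resSo M)) + embSoL (S (resSo N))
    rw [resSo_add, map_add, embSoL_add]
  map_smul' c M := by
    show embSoL (S (resSo (c • M))) = c • embSoL (S (resSo M))
    rw [resSo_smul, LinearMap.map_smul, embSoL_smul]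

/-- The normalized-instability curve in the product space:
`t ↦ (α₀/(1-λα₀t)) E(R̂_I) + (1/(1-λt)) E(R̂_W)`. -/
def curveE {n k : ℕ} (RI RW : Module.End ℝ (so n)) (lam a t : ℝ) :
    Module.End ℝ (so (n + k)) :=
  (a / (1 - lam * a * t)) • extEnd RI + (1 / (1 - lam * t)) • extEnd RW


/-! ### Helper lemmas -/

lemma ip_eq {n : ℕ} (X Y : so n) : ip X Y = (1 / 2) * ∑ i, ∑ j, X.1 i j * Y.1 i j := by
  unfold ip
  rw [Matrix.trace, Finset.mul_sum, Finset.mul_sum]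
  refine Finset.sum_congr rfl fun i _ => ?_
  rw [Matrix.diag_apply, Matrix.mul_apply, Finset.mul_sum, Finset.mul_sum]
  refine Finset.sum_congr rfl fun j _ => ?_
  rw [so_skew' Y i j]; ring

lemma ip_comm {n : ℕ} (X Y : so n) : ip X Y = ip Y X := by
  rw [ip_eq, ip_eq]; simp only [mul_comm]

lemma ip_pos {n : ℕ} (X : so n) (h : X ≠ 0) : 0 < ip X X := by
  rw [ip_eq]
  by_contra hc
  apply h
  have hz : ∑ i, ∑ j, X.1 i j * X.1 i j = 0 :=
    le_antisymm (by linarith)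
      (Finset.sum_nonneg fun i _ => Finset.sum_nonneg fun j _ => mul_self_nonneg _)
  apply Subtype.ext
  ext i j
  have h0 := (Finset.sum_eq_zero_iff_of_nonneg
    (fun i _ => Finset.sum_nonneg fun j _ => mul_self_nonneg _)).1 hz i (Finset.mem_univ _)
  have h1 := (Finset.sum_eq_zero_iff_of_nonneg (fun j _ => mul_self_nonneg _)).1 h0 j
    (Finset.mem_univ _)
  exact mul_self_eq_zero.1 h1

lemma ip_nonneg {n : ℕ} (X : so n) : 0 ≤ ip X X := by
  rw [ip_eq]
  have := Finset.sum_nonneg fun (i : Fin n) (_ : i ∈ Finset.univ) =>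
    Finset.sum_nonneg fun (j : Fin n) (_ : j ∈ Finset.univ) => mul_self_nonneg (X.1 i j)
  linarith

lemma omegaB_apply {n : ℕ} (i j a b : Fin n) : (omegaB (i, j)).1 a b =
    (if a = i then 1 else 0) * (if b = j then 1 else 0)
      - (if a = j then 1 else 0) * (if b = i then 1 else 0) := by
  simp [omegaB, wedgeVec, stdVec, Pi.single_apply]

lemma ip_omegaB {n : ℕ} (X : so n) (i j : Fin n) : ip X (omegaB (i, j)) = X.1 i j := by
  rw [ip_eq]
  simp only [omegaB_apply, mul_sub, Finset.sum_sub_distrib]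
  simp
  rw [so_skew' X i j]; ring

lemma omegaB_swap {n : ℕ} (i j : Fin n) : omegaB (j, i) = - omegaB (i, j) := by
  apply Subtype.ext; ext a b
  simp only [Submodule.coe_neg, Matrix.neg_apply, omegaB_apply]; ring

lemma omegaB_self {n : ℕ} (i : Fin n) : omegaB (i, i) = 0 := by
  apply Subtype.ext; ext a b
  simp only [Submodule.coe_zero, Matrix.zero_apply, omegaB_apply]; ring

lemma sum_pairs {n : ℕ} {M : Type*} [AddCommGroup M] [Module ℝ M] (f : Fin n × Fin n → M)
    (hs : ∀ i j, f (j, i) = f (i, j)) (h0 : ∀ i, f (i, i) = 0) :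
    ∑ p ∈ pairs n, f p = (1 / 2 : ℝ) • ∑ i, ∑ j, f (i, j) := by
  have h1 : ∑ p ∈ pairs n, f p = ∑ i, ∑ j, if i < j then f (i, j) else 0 := by
    rw [pairs, Finset.sum_filter, Fintype.sum_prod_type]
  have h2 : ∑ i, ∑ j, (if i < j then f (i, j) else 0)
      = ∑ i, ∑ j, (if j < i then f (i, j) else 0) := by
    rw [Finset.sum_comm]
    simp only [hs]
  have h3 : ∑ i, ∑ j, f (i, j) = ∑ i, ∑ j, (if i < j then f (i, j) else 0)
      + ∑ i, ∑ j, (if j < i then f (i, j) else 0) := by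
    simp only [← Finset.sum_add_distrib]
    refine Finset.sum_congr rfl fun i _ => Finset.sum_congr rfl fun j _ => ?_
    rcases lt_trichotomy i j with h | h | h
    · simp [h, not_lt_of_gt h]
    · subst h; simp [h0]
    · simp [h, not_lt_of_gt h]
  rw [h3, ← h2, h1, ← two_smul ℝ, smul_smul]; norm_num

lemma so_sum_apply {n : ℕ} {ι : Type*} (s : Finset ι) (f : ι → so n) (a b : Fin n) :
    (∑ x ∈ s, f x).1 a b = ∑ x ∈ s, (f x).1 a b := by
  have : (∑ x ∈ s, f x).1 = ∑ x ∈ s, (f x).1 := by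
    rw [← Submodule.subtype_apply, map_sum]; rfl
  rw [this, Matrix.sum_apply]

lemma so_expand {n : ℕ} (X : so n) :
    X = (1 / 2 : ℝ) • ∑ i, ∑ j, X.1 i j • omegaB (i, j) := by
  apply Subtype.ext; ext a b
  simp only [SetLike.val_smul, Matrix.smul_apply, so_sum_apply, omegaB_apply, smul_eq_mul,
    mul_sub, Finset.sum_sub_distrib]
  simp
  rw [so_skew' X a b]; ring

lemma parseval {n : ℕ} (X : so n) : ∑ p ∈ pairs n, ip X (omegaB p) • omegaB p = X := by
  rw [sum_pairs]
  · simp only [ip_omegaB]; exact (so_expand X).symm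
  · intro i j; simp only [ip_omegaB]; rw [omegaB_swap, so_skew' X i j]; simp
  · intro i; simp [omegaB_self]

lemma trace_eq {n : ℕ} (A : Module.End ℝ (so n)) :
    LinearMap.trace ℝ (so n) A = ∑ p ∈ pairs n, ip (A (omegaB p)) (omegaB p) := by
  have : A = ∑ p ∈ pairs n, (ipL (omegaB p)).smulRight (A (omegaB p)) := by
    ext1 X
    conv_lhs => rw [← parseval X]
    simp only [map_sum, map_smul, LinearMap.sum_apply, LinearMap.smulRight_apply]
    refine Finset.sum_congr rfl fun p _ => ?_
    rw [ip_comm]; rfl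
  conv_lhs => rw [this]
  rw [map_sum]
  refine Finset.sum_congr rfl fun p _ => ?_
  rw [LinearMap.trace_smulRight, ip_comm]; rfl

lemma ip_brkt {n : ℕ} (X Y Z : so n) : ip (brkt X Y) Z = ip Y (brkt Z X) := by
  simp only [ip, brkt, Matrix.sub_mul, Matrix.mul_sub, Matrix.trace_sub]
  have h1 : (X.1 * Y.1 * Z.1).trace = (Y.1 * (Z.1 * X.1)).trace := by
    rw [Matrix.mul_assoc, Matrix.trace_mul_comm, Matrix.mul_assoc]
  have h2 : (Y.1 * X.1 * Z.1).trace = (Y.1 * (X.1 * Z.1)).trace := by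
    rw [Matrix.mul_assoc]
  rw [h1, h2]

/-- `brkt` as a bilinear map. -/
def brktL {n : ℕ} : so n →ₗ[ℝ] so n →ₗ[ℝ] so n :=
  LinearMap.mk₂ ℝ brkt
    (fun X Y Z => by apply Subtype.ext; simp [brkt, Matrix.add_mul, Matrix.mul_add]; abel)
    (fun c X Y => by apply Subtype.ext; simp [brkt, smul_sub])
    (fun X Y Z => by apply Subtype.ext; simp [brkt, Matrix.add_mul, Matrix.mul_add]; abel)
    (fun c X Y => by apply Subtype.ext; simp [brkt, smul_sub])

lemma brktL_apply {n : ℕ} (X Y : so n) : brktL X Y = brkt X Y := rfl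

lemma brkt_skew {n : ℕ} (X Y : so n) : brkt X Y = - brkt Y X := by
  apply Subtype.ext; simp [brkt]

lemma ipL_apply {n : ℕ} (X Y : so n) : ipL X Y = ip X Y := rfl

lemma ip_add_left {n : ℕ} (X Y Z : so n) : ip (X + Y) Z = ip X Z + ip Y Z := by
  rw [ip_comm, ← ipL_apply, map_add, ipL_apply, ipL_apply, ip_comm Z, ip_comm Z]

lemma ip_smul_left {n : ℕ} (c : ℝ) (X Z : so n) : ip (c • X) Z = c * ip X Z := by
  rw [ip_comm, ← ipL_apply, map_smul, ipL_apply, ip_comm Z, smul_eq_mul]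

lemma ip_sum_left {n : ℕ} {ι : Type*} (s : Finset ι) (f : ι → so n) (Z : so n) :
    ip (∑ x ∈ s, f x) Z = ∑ x ∈ s, ip (f x) Z := by
  rw [ip_comm, ← ipL_apply, map_sum]
  exact Finset.sum_congr rfl fun x _ => ip_comm _ _

lemma sharp_apply {n : ℕ} (A B : Module.End ℝ (so n)) (φ : so n) :
    sharp A B φ = (1 / 2 : ℝ) • ∑ p ∈ pairs n, ∑ q ∈ pairs n,
      ip (brktL (A (omegaB p)) (B (omegaB q))) φ • brktL (omegaB p) (omegaB q) := by
  simp only [sharp, LinearMap.smul_apply, LinearMap.sum_apply, LinearMap.smulRight_apply]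
  rfl

lemma sharp_add_left {n : ℕ} (A B C : Module.End ℝ (so n)) :
    sharp (A + B) C = sharp A C + sharp B C := by
  ext1 φ
  simp only [LinearMap.add_apply, sharp_apply, map_add, ip_add_left, add_smul,
    Finset.sum_add_distrib, smul_add]

lemma sharp_smul_left {n : ℕ} (c : ℝ) (A C : Module.End ℝ (so n)) :
    sharp (c • A) C = c • sharp A C := by
  ext1 φ
  simp only [LinearMap.smul_apply, sharp_apply, map_smul, ip_smul_left, Finset.smul_sum, smul_smul]
  refine Finset.sum_congr rfl fun p _ => Finset.sum_congr rfl fun q _ => ?_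
  congr 1; ring

lemma sharp_comm {n : ℕ} (A B : Module.End ℝ (so n)) : sharp A B = sharp B A := by
  ext1 φ
  simp only [sharp_apply]
  rw [Finset.sum_comm]
  congr 1
  refine Finset.sum_congr rfl fun p _ => Finset.sum_congr rfl fun q _ => ?_
  simp only [brktL_apply]
  rw [brkt_skew (A _), brkt_skew (omegaB q), ← neg_one_smul ℝ (brkt (B _) _), ip_smul_left]
  simp

lemma sharp_one {n : ℕ} (A : Module.End ℝ (so n)) (φ : so n) :
    sharp A 1 φ = (1 / 2 : ℝ) • ∑ p ∈ pairs n,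
      brktL (omegaB p) (brktL φ (A (omegaB p))) := by
  rw [sharp_apply]
  congr 1
  refine Finset.sum_congr rfl fun p _ => ?_
  conv_rhs => rw [← parseval (brktL φ (A (omegaB p)))]
  rw [map_sum]
  refine Finset.sum_congr rfl fun q _ => ?_
  rw [map_smul]
  congr 1
  simp only [brktL_apply, Module.End.one_apply]
  rw [ip_brkt, ip_comm]

lemma trace_sharp_self {n : ℕ} (W : Module.End ℝ (so n)) :
    LinearMap.trace ℝ (so n) (sharp W W) = LinearMap.trace ℝ (so n) (sharp W 1 * W) := by
  rw [trace_eq (sharp W 1 * W)]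
  simp only [Module.End.mul_apply, sharp_one, ip_smul_left, ip_sum_left, brktL_apply, ip_brkt]
  simp only [sharp, map_smul, map_sum, LinearMap.trace_smulRight, ipL_apply, smul_eq_mul,
    Finset.mul_sum, ip_brkt]

/-- `R + R # id = Ric(R) ∧ id`, in the Einstein case. -/
lemma add_sharp_one {n : ℕ} (A : Module.End ℝ (so n)) (hA : IsACO A) (r : ℝ)
    (hr : RicM A = r • (1 : Matrix (Fin n) (Fin n) ℝ)) : A + sharp A 1 = r • 1 := by
  obtain ⟨hsa, hB⟩ := hA
  obtain ⟨R, hR⟩ : ∃ R : Fin n → Fin n → Fin n → Fin n → ℝ,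
    ∀ i j k l, (A (omegaB (i, j))).1 k l = R i j k l := ⟨_, fun _ _ _ _ => rfl⟩
  have a1 : ∀ i j k l, R j i k l = - R i j k l := by
    intro i j k l; rw [← hR, ← hR, omegaB_swap]; simp
  have a2 : ∀ i j k l, R i j l k = - R i j k l := by
    intro i j k l; rw [← hR, ← hR, so_skew']
  have a3 : ∀ i j k l, R k l i j = R i j k l := by
    intro i j k l; rw [← hR, ← hR, ← ip_omegaB, ← ip_omegaB, hsa, ip_comm]
  have a4 : ∀ i j k l, R i j k l + R j k i l + R k i j l = 0 := by
    intro i j k l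
    have := hB (stdVec i) (stdVec j) (stdVec k) (stdVec l)
    simp only [← hR, ← ip_omegaB]; exact this
  have a5 : ∀ i j, ∑ k, R i k j k = r * if i = j then 1 else 0 := by
    intro i j
    have := congrFun (congrFun hr i) j
    simp only [RicM, Matrix.of_apply, Matrix.smul_apply, Matrix.one_apply, smul_eq_mul] at this
    rw [← this]
    simp only [← hR, ← ip_omegaB]; rfl
  have a0 : ∀ i k l, R i i k l = 0 := by intro i k l; linarith [a1 i i k l]
  ext1 φ
  apply Subtype.ext; ext a b
  have hAφ : (A φ).1 a b = (1 / 2) * ∑ j, ∑ c, φ.1 j c * R j c a b := by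
    conv_lhs => rw [so_expand φ]
    simp only [map_smul, map_sum, SetLike.val_smul, Matrix.smul_apply, so_sum_apply, hR,
      smul_eq_mul]
  have hM : ∀ i j c d, (brktL φ (A (omegaB (i, j)))).1 c d
      = ∑ e, φ.1 c e * R i j e d - ∑ e, R i j c e * φ.1 e d := by
    intro i j c d
    simp only [brktL_apply, brkt, Matrix.sub_apply, Matrix.mul_apply, hR]
  obtain ⟨M, hMd⟩ : ∃ M : Fin n → Fin n → Fin n → Fin n → ℝ,
    ∀ i j k l, (brktL φ (A (omegaB (i, j)))).1 k l = M i j k l := ⟨_, fun _ _ _ _ => rfl⟩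
  have m1 : ∀ i j k l, M j i k l = - M i j k l := by
    intro i j k l; rw [← hMd, ← hMd, omegaB_swap]; simp
  have hS : (sharp A 1 φ).1 a b = (1 / 2) * ∑ j, (M a j j b + M b j a j) := by
    rw [sharp_one, sum_pairs]
    · simp only [SetLike.val_smul, Matrix.smul_apply, so_sum_apply, smul_eq_mul]
      have : ∀ i j, (brktL (omegaB (i, j)) (brktL φ (A (omegaB (i, j))))).1 a b
         = ((if a = i then 1 else 0) * M i j j b - (if a = j then 1 else 0) * M i j i b)
          - (M i j a i * (if b = j then 1 else 0) - M i j a j * (if b = i then 1 else 0)) := by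
        intro i j
        rw [brktL_apply]
        simp only [brkt, Matrix.sub_apply, Matrix.mul_apply, hMd, omegaB_apply, sub_mul, mul_sub,
          Finset.sum_sub_distrib]
        simp
      simp only [this, Finset.sum_sub_distrib, Finset.sum_add_distrib]
      have e1 : ∑ i, ∑ j, (if a = i then (1 : ℝ) else 0) * M i j j b = ∑ j, M a j j b := by
        rw [Finset.sum_comm]; simp
      have e2 : ∑ i, ∑ j, (if a = j then (1 : ℝ) else 0) * M i j i b = - ∑ j, M a j j b := by
        simp [m1 a]
      have e3 : ∑ i, ∑ j, M i j a i * (if b = j then (1 : ℝ) else 0) = - ∑ j, M b j a j := by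
        simp [m1 b]
      have e4 : ∑ i, ∑ j, M i j a j * (if b = i then (1 : ℝ) else 0) = ∑ j, M b j a j := by
        rw [Finset.sum_comm]; simp
      rw [e1, e2, e3, e4]; ring
    · intro i j; rw [omegaB_swap]; simp
    · intro i; simp [omegaB_self]
  simp only [LinearMap.add_apply, Submodule.coe_add, Matrix.add_apply, LinearMap.smul_apply,
    SetLike.val_smul, Matrix.smul_apply, Module.End.one_apply, smul_eq_mul]
  rw [hAφ, hS]
  simp only [← hMd, hM, Finset.sum_add_distrib, Finset.sum_sub_distrib]
  -- first term
  have t1 : ∑ j, ∑ c, φ.1 j c * R a j c b = - ((1 / 2) * ∑ j, ∑ c, φ.1 j c * R j c a b) := by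
    have h1 : ∑ j, ∑ c, φ.1 j c * R a j c b = - ∑ j, ∑ c, φ.1 j c * R a c j b := by
      rw [Finset.sum_comm]
      simp only [← Finset.sum_neg_distrib]
      refine Finset.sum_congr rfl fun j _ => Finset.sum_congr rfl fun c _ => ?_
      rw [so_skew' φ j c]; ring
    have h2 : ∑ j, ∑ c, φ.1 j c * R j c a b
        = - ∑ j, ∑ c, φ.1 j c * R a j c b + ∑ j, ∑ c, φ.1 j c * R a c j b := by
      simp only [← Finset.sum_neg_distrib, ← Finset.sum_add_distrib]
      refine Finset.sum_congr rfl fun j _ => Finset.sum_congr rfl fun c _ => ?_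
      have := a4 a j c b
      rw [a1 a c j b] at this
      linear_combination φ.1 j c * this
    linarith
  have t4 : ∑ j, ∑ c, R b j a c * φ.1 c j = - ((-(1 / 2)) * ∑ j, ∑ c, φ.1 j c * R j c a b) := by
    have : ∑ j, ∑ c, R b j a c * φ.1 c j = - ∑ j, ∑ c, φ.1 j c * R a j c b := by
      rw [Finset.sum_comm]
      simp only [← Finset.sum_neg_distrib]
      refine Finset.sum_congr rfl fun j _ => Finset.sum_congr rfl fun c _ => ?_
      rw [← a3, a2 a j c b]; ring
    rw [this, t1]; ring
  have t2 : ∑ j, ∑ c, R a j j c * φ.1 c b = - (r * φ.1 a b) := by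
    rw [Finset.sum_comm]
    have : ∀ c, ∑ j, R a j j c * φ.1 c b = - (r * (if a = c then 1 else 0) * φ.1 c b) := by
      intro c
      rw [← a5, Finset.sum_mul, ← Finset.sum_neg_distrib]
      refine Finset.sum_congr rfl fun j _ => ?_
      rw [a2 a j c j]; ring
    simp [this]
  have t3 : ∑ j, ∑ c, φ.1 a c * R b j c j = r * φ.1 a b := by
    rw [Finset.sum_comm]
    simp only [← Finset.mul_sum, a5]
    simp [mul_comm]
  rw [t1, t2, t3, t4]; ring

lemma isACO_one {n : ℕ} : IsACO (1 : Module.End ℝ (so n)) := by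
  refine ⟨fun X Y => rfl, fun x y z w => ?_⟩
  simp only [Module.End.one_apply, ip_eq, wedgeVec, Matrix.of_apply, ← mul_add,
    ← Finset.sum_add_distrib]
  have key : ∀ f : Fin n → Fin n → ℝ, (∀ i j, f j i = - f i j) → ∑ i, ∑ j, f i j = 0 := by
    intro f hf
    have h1 : ∑ i, ∑ j, f i j = - ∑ i, ∑ j, f i j := by
      conv_lhs => rw [Finset.sum_comm]
      simp only [← Finset.sum_neg_distrib, ← hf]
    linarith
  have h2 : ∀ x y z w : Fin n → ℝ, ∑ i, ∑ j, (x i * y j - y i * x j) * (z i * w j - w i * z j)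
      = 2 * ((∑ i, x i * z i) * (∑ j, y j * w j) - (∑ i, x i * w i) * (∑ j, y j * z j)) := by
    intro x y z w
    have e : ∀ x y z w : Fin n → ℝ, (∑ i, x i * z i) * (∑ j, y j * w j)
        = ∑ i, ∑ j, (x i * y j) * (z i * w j) := by
      intro x y z w
      rw [Finset.sum_mul_sum]
      refine Finset.sum_congr rfl fun i _ => Finset.sum_congr rfl fun j _ => ?_
      ring
    have e1 := e x y z w
    have e2 := e y x w z
    have e3 := e x y w z
    have e4 := e y x z w
    have : ∑ i, ∑ j, (x i * y j - y i * x j) * (z i * w j - w i * z j)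
       = ∑ i, ∑ j, (x i * y j) * (z i * w j) + ∑ i, ∑ j, (y i * x j) * (w i * z j)
        - ∑ i, ∑ j, (x i * y j) * (w i * z j) - ∑ i, ∑ j, (y i * x j) * (z i * w j) := by
      simp only [← Finset.sum_add_distrib, ← Finset.sum_sub_distrib]
      refine Finset.sum_congr rfl fun i _ => Finset.sum_congr rfl fun j _ => ?_
      ring
    rw [this, ← e1, ← e2, ← e3, ← e4]; ring
  simp only [Finset.sum_add_distrib, h2]
  have c : ∀ x y : Fin n → ℝ, ∑ i, x i * y i = ∑ i, y i * x i := fun x y => by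
    simp only [mul_comm]
  rw [c y x, c z x, c z y]; ring

lemma ric_one {n : ℕ} : RicM (1 : Module.End ℝ (so n))
    = ((n : ℝ) - 1) • (1 : Matrix (Fin n) (Fin n) ℝ) := by
  ext i j
  simp only [RicM, Matrix.of_apply, Module.End.one_apply]
  have : ∀ k, ip (wedgeVec (stdVec i) (stdVec k)) (wedgeVec (stdVec j) (stdVec k))
      = (if j = i then 1 else 0) - (if j = k then 1 else 0) * (if k = i then 1 else 0) := by
    intro k
    have h := ip_omegaB (omegaB (i, k)) j k
    rw [omegaB_apply, if_pos (rfl : k = k), mul_one] at h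
    exact h
  simp only [this, Finset.sum_sub_distrib]
  by_cases h : i = j
  · subst h; simp
  · simp [h, Ne.symm h]

lemma scal_eq {n : ℕ} (A : Module.End ℝ (so n)) :
    scal A = 2 * LinearMap.trace ℝ (so n) A := by
  rw [trace_eq, sum_pairs]
  · simp only [scal, Matrix.trace, RicM, Matrix.diag_apply, Matrix.of_apply, smul_eq_mul]
    rw [← mul_assoc]; norm_num; rfl
  · intro i j; rw [omegaB_swap]
    rw [← neg_one_smul ℝ (omegaB _), map_smul, ip_smul_left, ip_comm, ip_smul_left, ip_comm]
    ring
  · intro i; rw [omegaB_self, map_zero, ip_eq]; simp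

lemma trace_ext {n k : ℕ} (S : Module.End ℝ (so n)) :
    LinearMap.trace ℝ (so (n + k)) (extEnd S) = LinearMap.trace ℝ (so n) S := by
  let e : so n →ₗ[ℝ] so (n + k) := ⟨⟨embSoL, embSoL_add⟩, embSoL_smul⟩
  let r : so (n + k) →ₗ[ℝ] so n := ⟨⟨resSo, resSo_add⟩, resSo_smul⟩
  have h1 : (extEnd S : Module.End ℝ (so (n + k))) = e ∘ₗ (S ∘ₗ r) := rfl
  have h2 : (S ∘ₗ r) ∘ₗ e = S := by
    ext1 X
    show S (resSo (embSoL X)) = S X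
    congr 1
    apply Subtype.ext; ext i j
    simp [resSo, embSoL]
  rw [h1, LinearMap.trace_comp_comm', h2]

lemma res_emb {n k : ℕ} (X : so n) : resSo (embSoL X : so (n + k)) = X := by
  apply Subtype.ext; ext i j
  simp [resSo, embSoL]

lemma extEnd_apply {n k : ℕ} (S : Module.End ℝ (so n)) (φ : so (n + k)) :
    extEnd S φ = embSoL (S (resSo φ)) := rfl

lemma extEnd_mul {n k : ℕ} (S T : Module.End ℝ (so n)) :
    (extEnd S * extEnd T : Module.End ℝ (so (n + k))) = extEnd (S * T) := by
  ext1 φ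
  simp only [Module.End.mul_apply, extEnd_apply, res_emb]

lemma extEnd_add {n k : ℕ} (S T : Module.End ℝ (so n)) :
    (extEnd (S + T) : Module.End ℝ (so (n + k))) = extEnd S + extEnd T := by
  ext1 φ
  simp only [LinearMap.add_apply, extEnd_apply, embSoL_add]

lemma extEnd_smul {n k : ℕ} (c : ℝ) (S : Module.End ℝ (so n)) :
    (extEnd (c • S) : Module.End ℝ (so (n + k))) = c • extEnd S := by
  ext1 φ
  simp only [LinearMap.smul_apply, extEnd_apply, embSoL_smul]

lemma emb_cc {n k : ℕ} (X : so n) (i j : Fin n) :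
    (embSoL X : so (n + k)).1 (Fin.castAdd k i) (Fin.castAdd k j) = X.1 i j := by
  simp [embSoL]
lemma emb_nl {n k : ℕ} (X : so n) (i : Fin k) (j : Fin (n + k)) :
    (embSoL X : so (n + k)).1 (Fin.natAdd n i) j = 0 := by
  simp [embSoL]
lemma emb_nr {n k : ℕ} (X : so n) (i : Fin k) (j : Fin (n + k)) :
    (embSoL X : so (n + k)).1 j (Fin.natAdd n i) = 0 := by
  simp [embSoL]

lemma ip_emb {n k : ℕ} (X : so n) (Y : so (n + k)) : ip (embSoL X) Y = ip X (resSo Y) := by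
  rw [ip_eq, ip_eq]
  simp only [Fin.sum_univ_add, emb_cc, emb_nl, emb_nr, zero_mul, Finset.sum_const_zero, add_zero]
  rfl

lemma brkt_emb {n k : ℕ} (X Y : so n) :
    (brkt (embSoL X) (embSoL Y) : so (n + k)) = embSoL (brkt X Y) := by
  apply Subtype.ext; ext i j
  refine Fin.addCases (fun i => ?_) (fun i => ?_) i <;>
  refine Fin.addCases (fun j => ?_) (fun j => ?_) j
  · rw [emb_cc]
    simp only [brkt, Matrix.sub_apply, Matrix.mul_apply, Fin.sum_univ_add, emb_cc, emb_nl, emb_nr,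
      zero_mul, Finset.sum_const_zero, add_zero]
  all_goals
    simp only [brkt, Matrix.sub_apply, Matrix.mul_apply, emb_nl, emb_nr,
      zero_mul, mul_zero, Finset.sum_const_zero, sub_zero]

lemma omega_cc {n k : ℕ} (i j : Fin n) :
    omegaB (Fin.castAdd k i, Fin.castAdd k j) = embSoL (omegaB (i, j)) := by
  apply Subtype.ext; ext a b
  refine Fin.addCases (fun a => ?_) (fun a => ?_) a <;>
  refine Fin.addCases (fun b => ?_) (fun b => ?_) b
  · rw [emb_cc, omegaB_apply, omegaB_apply]; simp
  all_goals
    simp only [emb_nl, emb_nr, omegaB_apply]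
    simp only [Fin.ext_iff, Fin.val_castAdd, Fin.val_natAdd]
    have hi := i.2
    have hj := j.2
    split_ifs <;> first | omega | norm_num

lemma res_omega_nl {n k : ℕ} (i : Fin k) (j : Fin (n + k)) :
    (resSo (omegaB (Fin.natAdd n i, j)) : so n) = 0 := by
  apply Subtype.ext; ext a b
  simp only [resSo, Matrix.of_apply, omegaB_apply]
  have h1 : ∀ a : Fin n, ¬ (Fin.castLE (Nat.le_add_right n k) a = Fin.natAdd n i) := by
    intro a h
    have := congrArg Fin.val h
    simp at this; omega
  simp [h1]

lemma res_omega_nr {n k : ℕ} (i : Fin k) (j : Fin (n + k)) :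
    (resSo (omegaB (j, Fin.natAdd n i)) : so n) = 0 := by
  rw [omegaB_swap, ← neg_one_smul ℝ, resSo_smul, res_omega_nl, smul_zero]

lemma embSoL_sum {n k : ℕ} {ι : Type*} (s : Finset ι) (f : ι → so n) :
    (embSoL (∑ x ∈ s, f x) : so (n + k)) = ∑ x ∈ s, embSoL (f x) := by
  let e : so n →ₗ[ℝ] so (n + k) := ⟨⟨embSoL, embSoL_add⟩, embSoL_smul⟩
  exact map_sum e f s

lemma emb_zero {n k : ℕ} : (embSoL 0 : so (n + k)) = 0 := by
  let e : so n →ₗ[ℝ] so (n + k) := ⟨⟨embSoL, embSoL_add⟩, embSoL_smul⟩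
  exact map_zero e

lemma sum_pairs_add {n k : ℕ} {M : Type*} [AddCommGroup M] [Module ℝ M]
    (f : Fin (n + k) × Fin (n + k) → M)
    (hl : ∀ i j, f (Fin.natAdd n i, j) = 0) (hr : ∀ i j, f (j, Fin.natAdd n i) = 0) :
    ∑ p ∈ pairs (n + k), f p
      = ∑ p ∈ pairs n, f (Fin.castAdd k p.1, Fin.castAdd k p.2) := by
  rw [pairs, Finset.sum_filter, Fintype.sum_prod_type, pairs, Finset.sum_filter,
    Fintype.sum_prod_type]
  simp only [Fin.sum_univ_add, hl, hr, ite_self, Finset.sum_const_zero, add_zero]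
  rfl

lemma extEnd_sharp {n k : ℕ} (S T : Module.End ℝ (so n)) :
    sharp (extEnd S) (extEnd T) = (extEnd (sharp S T) : Module.End ℝ (so (n + k))) := by
  ext1 φ
  rw [sharp_apply, extEnd_apply, sharp_apply, embSoL_smul, embSoL_sum]
  congr 1
  rw [sum_pairs_add]
  · refine Finset.sum_congr rfl fun p _ => ?_
    rw [embSoL_sum, sum_pairs_add]
    · refine Finset.sum_congr rfl fun q _ => ?_
      rw [omega_cc, omega_cc, embSoL_smul]
      simp only [extEnd_apply, res_emb, brktL_apply, brkt_emb, ip_emb]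
    · intro i j; rw [extEnd_apply T, res_omega_nl, map_zero, emb_zero, map_zero, ip_eq]; simp
    · intro i j; rw [extEnd_apply T, res_omega_nr, map_zero, emb_zero, map_zero, ip_eq]; simp
  · intro i j
    refine Finset.sum_eq_zero fun q _ => ?_
    rw [extEnd_apply S, res_omega_nl, map_zero, emb_zero, map_zero, ip_eq]; simp
  · intro i j
    refine Finset.sum_eq_zero fun q _ => ?_
    rw [extEnd_apply S, res_omega_nr, map_zero, emb_zero, map_zero, ip_eq]; simp

lemma extEnd_Q {n k : ℕ} (S : Module.End ℝ (so n)) :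
    Qop (extEnd S) = (extEnd (Qop S) : Module.End ℝ (so (n + k))) := by
  rw [Qop, Qop, extEnd_add, extEnd_mul, extEnd_sharp]

lemma trace_sq_pos {n : ℕ} (W : Module.End ℝ (so n)) (hW : IsSelfAdjointCO W) (h0 : W ≠ 0) :
    0 < LinearMap.trace ℝ (so n) (W * W) := by
  rw [trace_eq]
  have e : ∀ p, ip ((W * W) (omegaB p)) (omegaB p) = ip (W (omegaB p)) (W (omegaB p)) :=
    fun p => hW _ _
  simp only [e]
  refine lt_of_le_of_ne (Finset.sum_nonneg fun p _ => ip_nonneg _) fun h => h0 ?_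
  rw [eq_comm, Finset.sum_eq_zero_iff_of_nonneg (fun p _ => ip_nonneg _)] at h
  ext1 X
  rw [← parseval X, map_sum]
  refine Finset.sum_eq_zero fun p hp => ?_
  have : W (omegaB p) = 0 := by
    by_contra hc
    exact absurd (h p hp) (ip_pos _ hc).ne'
  rw [map_smul, this, smul_zero]

/-- The algebraic core: the quadratic vector field on the span of `R_I` and `R_W`. -/
lemma core {n : ℕ} (hn : 1 ≤ n) (Rh : Module.End ℝ (so n))
    (hACO : IsACO Rh) (hEin : IsEinstein Rh) (hs : 0 < scal Rh)
    (hnotI : ¬ ∃ c : ℝ, Rh = c • (1 : Module.End ℝ (so n)))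
    (lam : ℝ) (hQ : Qop Rh = lam • Rh) :
    (∀ x y : ℝ, Qop (x • compI Rh + y • compW Rh)
      = (lam * x ^ 2) • compI Rh + (lam * y ^ 2) • compW Rh) ∧
    0 < LinearMap.trace ℝ (so n) (compW Rh * compW Rh) := by
  obtain ⟨r, hr⟩ := hEin
  have hnpos : (0 : ℝ) < n := by exact_mod_cast hn
  have hn2 : 2 ≤ n := by
    by_contra hc
    apply hnotI
    have : n = 1 := by omega
    subst this
    refine ⟨0, ?_⟩
    ext1 X
    apply Subtype.ext; ext i j
    have h1 := so_skew' (Rh X) i j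
    have h2 : i = j := Subsingleton.elim _ _
    subst h2
    simp; linarith
  have hn1 : (0 : ℝ) < (n : ℝ) - 1 := by
    have : (2 : ℝ) ≤ n := by exact_mod_cast hn2
    linarith
  have hsr : scal Rh = r * n := by simp [scal, hr]
  have hR0 : Ric0M Rh = 0 := by
    rw [Ric0M, hr, hsr, mul_div_assoc, div_self hnpos.ne', mul_one, sub_self]
  obtain ⟨c, hc⟩ : ∃ c, c = scal Rh / ((n : ℝ) * ((n : ℝ) - 1)) := ⟨_, rfl⟩
  have hI : compI Rh = c • 1 := by rw [hc]; rfl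
  have hcpos : 0 < c := by rw [hc]; positivity
  have hcr : c * ((n : ℝ) - 1) = r := by rw [hc, hsr]; field_simp
  have hW0 : wedgeEnd (0 : Matrix (Fin n) (Fin n) ℝ) 1 = 0 := by
    ext1 X; apply Subtype.ext; simp [wedgeEnd]
  have hWd : compW Rh = Rh + (-c) • 1 := by
    rw [compW, compRic0, hR0, hW0, hI, smul_zero]; module
  obtain ⟨W, hWe⟩ : ∃ W, W = compW Rh := ⟨_, rfl⟩
  rw [← hWe] at hWd ⊢
  have hRW : Rh = W + c • 1 := by rw [hWd]; module
  have h11 := add_sharp_one (1 : Module.End ℝ (so n)) isACO_one _ ric_one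
  have hR1 := add_sharp_one Rh hACO r hr
  have s11 : sharp (1 : Module.End ℝ (so n)) 1 = ((n : ℝ) - 1) • 1 - 1 := by
    rw [← h11]; abel
  have sW1 : sharp W 1 = - W := by
    have : sharp Rh 1 = r • 1 - Rh := by rw [← hR1]; abel
    rw [hWd, sharp_add_left, sharp_smul_left, this, s11, ← hcr]; module
  have s1W : sharp 1 W = - W := by rw [sharp_comm, sW1]
  have hQg : ∀ x y : ℝ, Qop (x • compI Rh + y • W)
      = (x ^ 2 * (c * ((n : ℝ) - 1))) • compI Rh + y ^ 2 • Qop W := by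
    intro x y
    have sr : ∀ (A B C : Module.End ℝ (so n)), sharp A (B + C) = sharp A B + sharp A C := by
      intro A B C; rw [sharp_comm, sharp_add_left, sharp_comm B, sharp_comm C]
    have srs : ∀ (a : ℝ) (A B : Module.End ℝ (so n)), sharp A (a • B) = a • sharp A B := by
      intro a A B; rw [sharp_comm, sharp_smul_left, sharp_comm]
    simp only [Qop, hI, sr, srs, sharp_add_left, sharp_smul_left, s11, sW1, s1W, mul_add, add_mul,
      smul_mul_assoc, mul_smul_comm, mul_one, one_mul]
    module
  have htrQ : LinearMap.trace ℝ (so n) (Qop W) = 0 := by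
    rw [Qop, map_add, trace_sharp_self, sW1]
    have : -W * W = (-1 : ℝ) • (W * W) := by
      rw [← smul_mul_assoc]; congr 1; module
    rw [this, map_smul, smul_eq_mul]; ring
  have htr1 : LinearMap.trace ℝ (so n) (1 : Module.End ℝ (so n)) = n * ((n : ℝ) - 1) / 2 := by
    have := scal_eq (1 : Module.End ℝ (so n))
    rw [scal, ric_one] at this
    simp at this ⊢; linarith
  have htrW : LinearMap.trace ℝ (so n) W = 0 := by
    have := scal_eq Rh
    rw [hWd, map_add, map_smul, htr1, smul_eq_mul]
    rw [hsr, ← hcr] at this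
    linarith
  have hQR : (c * ((n : ℝ) - 1)) • (c • (1 : Module.End ℝ (so n))) + Qop W
      = lam • (W + c • 1) := by
    have := hQg 1 1
    rw [one_smul, one_smul, hI, add_comm, ← hRW, hQ] at this
    rw [← hRW, this]; module
  have hl : c * ((n : ℝ) - 1) = lam := by
    have := congrArg (LinearMap.trace ℝ (so n)) hQR
    simp only [map_add, map_smul, htrQ, htrW, htr1, smul_eq_mul] at this
    have hne : c * (n * ((n : ℝ) - 1) / 2) ≠ 0 := by positivity
    apply mul_right_cancel₀ hne
    linarith
  have hQW : Qop W = lam • W := by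
    rw [hl] at hQR
    have : Qop W = (lam • (c • (1 : Module.End ℝ (so n))) + Qop W) - lam • (c • 1) := by module
    rw [this, hQR]; module
  refine ⟨fun x y => ?_, trace_sq_pos W ?_ ?_⟩
  · rw [hQg, hl, hQW]; module
  · intro X Y
    rw [hWd]
    simp only [LinearMap.add_apply, LinearMap.smul_apply, Module.End.one_apply]
    rw [ip_add_left, ip_comm X, ip_add_left, ip_smul_left, ip_smul_left, hACO.1, ip_comm X (Rh Y),
      ip_comm X Y]
  · intro h
    exact hnotI ⟨c, by rw [hRW, h, zero_add]⟩

lemma curveE_eq {n k : ℕ} (RI RW : Module.End ℝ (so n)) (lam a t : ℝ) :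
    (curveE RI RW lam a t : Module.End ℝ (so (n + k))) =
      extEnd ((a / (1 - lam * a * t)) • RI + (1 / (1 - lam * t)) • RW) := by
  rw [curveE, extEnd_add, extEnd_smul, extEnd_smul]

lemma endNorm_ext {n k : ℕ} (S : Module.End ℝ (so n)) :
    endNorm (extEnd S : Module.End ℝ (so (n + k))) = endNorm S := by
  rw [endNorm, endNorm, endIP, endIP, extEnd_mul, trace_ext]

lemma hasDerivAt_frac (lam a t : ℝ) (h : 1 - lam * a * t ≠ 0) :
    HasDerivAt (fun s => a / (1 - lam * a * s)) (lam * (a / (1 - lam * a * t)) ^ 2) t := by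
  have h1 : HasDerivAt (fun s : ℝ => 1 - lam * a * s) (-(lam * a)) t := by
    simpa using ((hasDerivAt_id t).const_mul (lam * a)).const_sub 1
  have h2 := (hasDerivAt_const t a).div h1 h
  have e : lam * (a / (1 - lam * a * t)) ^ 2
      = (0 * (1 - lam * a * t) - a * -(lam * a)) / (1 - lam * a * t) ^ 2 := by
    rw [div_pow]; ring
  rw [e]; exact h2

/-- Let `n, k ≥ 1` and let `R̂ ∈ S²_B(⋀²ℝⁿ)` be Einstein with
`s(R̂) > 0`, not a multiple of `id ∧ id`, with `Q(R̂) = λR̂`, `λ > 0`.  Let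
`E : S²_B(⋀²ℝⁿ) → S²_B(⋀²ℝ^{n+k})` be extension by zero as a product curvature
operator.  Then for every `α₀ ∈ (0,1)` the curve
`R(t) = (α₀/(1-λα₀t)) E(R̂_I) + (1/(1-λt)) E(R̂_W)` on `[0,1/λ)` solves
`dR/dt = Q(R(t))` (componentwise) with `R(0) = E(α₀R̂_I + R̂_W)`, and `R(t)/‖R(t)‖`
converges to `E(R̂_W)/‖R̂_W‖` as `t → 1/λ`: the ODE `dR/dt = Q(R)` behaves unstably
near the product curvature operator `E(R̂)`. -/
theorem stmt4 (n k : ℕ) (hn : 1 ≤ n) (hk : 1 ≤ k)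
    (Rh : Module.End ℝ (so n))
    (hACO : IsACO Rh) (hEin : IsEinstein Rh) (hs : 0 < scal Rh)
    (hnotI : ¬ ∃ c : ℝ, Rh = c • (1 : Module.End ℝ (so n)))
    (lam : ℝ) (hlam : 0 < lam) (hQ : Qop Rh = lam • Rh) :
    ∀ a ∈ Set.Ioo (0 : ℝ) 1,
      (∀ t ∈ Set.Ico (0 : ℝ) (1 / lam), ∀ (φ : so (n + k)) (i j : Fin (n + k)),
        HasDerivAt (fun s => ((curveE (k := k) (compI Rh) (compW Rh) lam a s : Module.End ℝ (so (n + k))) φ).1 i j)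
          (((Qop (curveE (k := k) (compI Rh) (compW Rh) lam a t)) φ).1 i j) t) ∧
      curveE (k := k) (compI Rh) (compW Rh) lam a 0 = extEnd (k := k) (a • compI Rh + compW Rh) ∧
      (∀ (φ : so (n + k)) (i j : Fin (n + k)),
        Filter.Tendsto
          (fun t => (endNorm (curveE (k := k) (compI Rh) (compW Rh) lam a t))⁻¹ *
            ((curveE (k := k) (compI Rh) (compW Rh) lam a t) φ).1 i j)
          (nhdsWithin (1 / lam) (Set.Iio (1 / lam)))
          (nhds ((endNorm (compW Rh))⁻¹ * ((extEnd (compW Rh) : Module.End ℝ (so (n + k))) φ).1 i j))) := by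
  obtain ⟨hcQ, hWpos⟩ := core hn Rh hACO hEin hs hnotI lam hQ
  rintro a ⟨ha0, ha1⟩
  refine ⟨?_, ?_, ?_⟩
  · rintro t ⟨ht0, ht1⟩ φ i j
    have hlt : lam * t < 1 := by
      rw [lt_div_iff₀ hlam] at ht1; linarith
    have hlt0 : 0 ≤ lam * t := by positivity
    have hd1 : 1 - lam * a * t ≠ 0 := by nlinarith
    have hd2 : 1 - lam * 1 * t ≠ 0 := by linarith
    have d1 := hasDerivAt_frac lam a t hd1
    have d2 := hasDerivAt_frac lam 1 t hd2
    simp only [mul_one] at d2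
    rw [curveE_eq, extEnd_Q, hcQ, extEnd_add, extEnd_smul, extEnd_smul]
    exact (d1.mul_const (((extEnd (compI Rh) : Module.End ℝ (so (n + k))) φ).1 i j)).add
      (d2.mul_const (((extEnd (compW Rh) : Module.End ℝ (so (n + k))) φ).1 i j))
  · rw [curveE_eq]; simp
  · intro φ i j
    obtain ⟨u, hu⟩ : ∃ u : ℝ → ℝ, u = fun t => a * (1 - lam * t) / (1 - lam * a * t) := ⟨_, rfl⟩
    have hu0 : Tendsto u (nhdsWithin (1 / lam) (Set.Iio (1 / lam))) (nhds 0) := by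
      have hc : ContinuousAt u (1 / lam) := by
        rw [hu]
        refine ContinuousAt.div (by fun_prop) (by fun_prop) ?_
        have : lam * a * (1 / lam) = a := by field_simp
        rw [this]; linarith
      have h0 : u (1 / lam) = 0 := by
        rw [hu]
        have : lam * (1 / lam) = 1 := by field_simp
        simp only [this]; simp
      have := hc.tendsto
      rw [h0] at this
      exact this.mono_left nhdsWithin_le_nhds
    have hN : ∀ v : ℝ, endIP (v • compI Rh + compW Rh) (v • compI Rh + compW Rh)
        = v ^ 2 * endIP (compI Rh) (compI Rh) + 2 * v * endIP (compI Rh) (compW Rh)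
          + endIP (compW Rh) (compW Rh) := by
      intro v
      simp only [endIP, mul_add, add_mul, smul_mul_assoc, mul_smul_comm, map_add, map_smul,
        smul_eq_mul]
      rw [LinearMap.trace_mul_comm ℝ (compW Rh) (compI Rh)]; ring
    have hNt : Tendsto (fun t => endNorm (u t • compI Rh + compW Rh))
        (nhdsWithin (1 / lam) (Set.Iio (1 / lam))) (nhds (endNorm (compW Rh))) := by
      have hcont : Continuous (fun v : ℝ => endNorm (v • compI Rh + compW Rh)) := by
        simp only [endNorm, hN]
        fun_prop
      have := (hcont.tendsto 0).comp hu0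
      rw [zero_smul, zero_add] at this
      exact this
    have hne : endNorm (compW Rh) ≠ 0 := (Real.sqrt_pos.2 hWpos).ne'
    have hmain : Tendsto (fun t => (endNorm (u t • compI Rh + compW Rh))⁻¹ *
        (u t * ((extEnd (compI Rh) : Module.End ℝ (so (n + k))) φ).1 i j
          + ((extEnd (compW Rh) : Module.End ℝ (so (n + k))) φ).1 i j))
        (nhdsWithin (1 / lam) (Set.Iio (1 / lam)))
        (nhds ((endNorm (compW Rh))⁻¹ *
          (0 * ((extEnd (compI Rh) : Module.End ℝ (so (n + k))) φ).1 i j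
          + ((extEnd (compW Rh) : Module.End ℝ (so (n + k))) φ).1 i j))) :=
      (hNt.inv₀ hne).mul ((hu0.mul_const _).add_const _)
    rw [zero_mul, zero_add] at hmain
    refine hmain.congr' ?_
    filter_upwards [self_mem_nhdsWithin] with t ht
    have hlt : 0 < 1 - lam * t := by
      have ht' : t < 1 / lam := ht
      rw [lt_div_iff₀ hlam] at ht'; linarith
    obtain ⟨y, hy⟩ : ∃ y, y = 1 / (1 - lam * t) := ⟨_, rfl⟩
    have hypos : 0 < y := by rw [hy]; positivity
    have hx : a / (1 - lam * a * t) = y * u t := by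
      rw [hu, hy]; field_simp
    have hcv : (a / (1 - lam * a * t)) • compI Rh + (1 / (1 - lam * t)) • compW Rh
        = y • (u t • compI Rh + compW Rh) := by
      rw [hx, ← hy]; module
    have hnorm : ∀ S : Module.End ℝ (so n), endNorm (y • S) = y * endNorm S := by
      intro S
      rw [endNorm, endNorm, endIP, endIP, smul_mul_assoc, mul_smul_comm, map_smul, map_smul,
        smul_eq_mul, smul_eq_mul, ← mul_assoc, Real.sqrt_mul (mul_self_nonneg y),
        Real.sqrt_mul_self hypos.le]
    rw [curveE_eq, endNorm_ext, hcv, hnorm, extEnd_smul, extEnd_add, extEnd_smul]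
    simp only [LinearMap.smul_apply, LinearMap.add_apply, SetLike.val_smul, Submodule.coe_add,
      Matrix.smul_apply, Matrix.add_apply, smul_eq_mul]
    rw [mul_inv]
    field_simp
end
end

section
/- For integers n ≥ 2 and k ≥ 1, the point (x, z) = (1, 1) is the unique solution with x > 0 and z > 0 of the system k − x − (k−1)xz = 0, n − z − (n−1)xz = 0. Moreover, the Jacobian at (1,1) of the planar vector field (x, z) ↦ (k − x − (k−1)xz, n − z − (n−1)xz) is the matrix [[−k, −(k−1)], [−(n−1), −n]], which has trace −(n+k) < 0 and determinant n + k − 1 > 0, so both of its eigenvalues have negative real part. -/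
noncomputable section

/-- The continuous linear map `ℝ × ℝ → ℝ × ℝ` with matrix `[[a, b], [c, d]]`. -/
def matCLM (a b c d : ℝ) : ℝ × ℝ →L[ℝ] ℝ × ℝ :=
  LinearMap.toContinuousLinearMap
    { toFun := fun p => (a * p.1 + b * p.2, c * p.1 + d * p.2)
      map_add' := by
        intro p q
        simp only [Prod.fst_add, Prod.snd_add, Prod.mk_add_mk, Prod.mk.injEq]
        constructor <;> ring
      map_smul' := by
        intro r p
        simp only [Prod.smul_fst, Prod.smul_snd, smul_eq_mul, RingHom.id_apply,
          Prod.smul_mk, Prod.mk.injEq]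
        constructor <;> ring }

/-- For `n ≥ 2`, `k ≥ 1`: `(1,1)` is the unique solution with `x, z > 0` of
`k - x - (k-1)xz = 0`, `n - z - (n-1)xz = 0`; the Jacobian at `(1,1)` of the planar
field `(x,z) ↦ (k - x - (k-1)xz, n - z - (n-1)xz)` is `[[-k, -(k-1)], [-(n-1), -n]]`,
which has trace `-(n+k) < 0`, determinant `n+k-1 > 0`, and all (complex) eigenvalues
with negative real part. -/
theorem stmt8 (n k : ℕ) (hn : 2 ≤ n) (hk : 1 ≤ k) :
    ((k : ℝ) - 1 - ((k : ℝ) - 1) * 1 * 1 = 0 ∧ (n : ℝ) - 1 - ((n : ℝ) - 1) * 1 * 1 = 0) ∧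
    (∀ x z : ℝ, 0 < x → 0 < z →
      (k : ℝ) - x - ((k : ℝ) - 1) * x * z = 0 →
      (n : ℝ) - z - ((n : ℝ) - 1) * x * z = 0 → x = 1 ∧ z = 1) ∧
    HasFDerivAt
      (fun p : ℝ × ℝ =>
        ((k : ℝ) - p.1 - ((k : ℝ) - 1) * p.1 * p.2,
         (n : ℝ) - p.2 - ((n : ℝ) - 1) * p.1 * p.2))
      (matCLM (-(k : ℝ)) (-((k : ℝ) - 1)) (-((n : ℝ) - 1)) (-(n : ℝ))) (1, 1) ∧
    (!![-(k : ℝ), -((k : ℝ) - 1); -((n : ℝ) - 1), -(n : ℝ)]).trace = -((n : ℝ) + (k : ℝ)) ∧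
    (!![-(k : ℝ), -((k : ℝ) - 1); -((n : ℝ) - 1), -(n : ℝ)]).trace < 0 ∧
    (!![-(k : ℝ), -((k : ℝ) - 1); -((n : ℝ) - 1), -(n : ℝ)]).det = (n : ℝ) + (k : ℝ) - 1 ∧
    0 < (!![-(k : ℝ), -((k : ℝ) - 1); -((n : ℝ) - 1), -(n : ℝ)]).det ∧
    (∀ (μ : ℂ) (v : Fin 2 → ℂ), v ≠ 0 →
      ((!![-(k : ℝ), -((k : ℝ) - 1); -((n : ℝ) - 1), -(n : ℝ)]).map
          (fun r : ℝ => (r : ℂ))).mulVec v = μ • v → μ.re < 0) := by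
  have hn' : (2:ℝ) ≤ n := by exact_mod_cast hn
  have hk' : (1:ℝ) ≤ k := by exact_mod_cast hk
  have htr : (!![-(k : ℝ), -((k : ℝ) - 1); -((n : ℝ) - 1), -(n : ℝ)]).trace
      = -((n : ℝ) + (k : ℝ)) := by
    rw [Matrix.trace_fin_two_of]; ring
  have hdet : (!![-(k : ℝ), -((k : ℝ) - 1); -((n : ℝ) - 1), -(n : ℝ)]).det
      = (n : ℝ) + (k : ℝ) - 1 := by
    rw [Matrix.det_fin_two_of]; ring
  refine ⟨⟨by ring, by ring⟩, ?_, ?_, htr, by rw [htr]; linarith, hdet,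
    by rw [hdet]; linarith, ?_⟩
  · intro x z hx hz h1 h2
    have ha : x - 1 = -((k:ℝ) - 1) * (x * z - 1) := by linarith
    have hb : z - 1 = -((n:ℝ) - 1) * (x * z - 1) := by linarith
    have hs : (x * z - 1) * (((k:ℝ) - 1) * ((n:ℝ) - 1) * (x * z - 1) - (n + k - 1)) = 0 := by
      have e : x * z - 1 = (x - 1) + (z - 1) + (x - 1) * (z - 1) := by ring
      rw [ha, hb] at e
      linear_combination -e
    rcases mul_eq_zero.mp hs with h | h
    · rw [h] at ha hb
      constructor <;> linarith
    · exfalso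
      have h3 : ((n:ℝ) - 1) * x = -k := by linear_combination ((n:ℝ) - 1) * ha - h
      have h4 : 0 < ((n:ℝ) - 1) * x := mul_pos (by linarith) hx
      linarith
  · have h1 : HasFDerivAt (fun p : ℝ × ℝ => p.1) (ContinuousLinearMap.fst ℝ ℝ ℝ) (1, 1) :=
      hasFDerivAt_fst
    have h2 : HasFDerivAt (fun p : ℝ × ℝ => p.2) (ContinuousLinearMap.snd ℝ ℝ ℝ) (1, 1) :=
      hasFDerivAt_snd
    have hA := (h1.const_sub (k:ℝ)).sub ((h1.const_mul ((k:ℝ) - 1)).mul h2)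
    have hB := (h2.const_sub (n:ℝ)).sub ((h1.const_mul ((n:ℝ) - 1)).mul h2)
    refine (hA.prodMk hB).congr_fderiv ?_
    refine ContinuousLinearMap.ext fun p => ?_
    refine Prod.ext ?_ ?_ <;> simp [matCLM] <;> ring
  · intro μ v hv h
    have e0 := congrFun h 0
    have e1 := congrFun h 1
    simp [Matrix.mulVec, dotProduct, Fin.sum_univ_two] at e0 e1
    have hs : (μ + (n + k - 1)) * (v 0 + v 1) = 0 := by linear_combination -e0 - e1
    rcases mul_eq_zero.mp hs with hm | hm
    · have : μ = ((-((n:ℝ) + k - 1) : ℝ) : ℂ) := by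
        push_cast; linear_combination hm
      rw [this, Complex.ofReal_re]; linarith
    · have hv1 : v 1 = - v 0 := by linear_combination hm
      have hz : (μ + 1) * v 0 = 0 := by
        rw [hv1] at e0; linear_combination -e0
      rcases mul_eq_zero.mp hz with h' | h'
      · have : μ = -1 := by linear_combination h'
        rw [this]; norm_num
      · exfalso
        apply hv
        funext i
        fin_cases i
        · simpa using h'
        · simp [hv1, h']

end
end
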